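/- arXiv:1111.2365 — 2 statements merged into one kernel-verified Lean document; each statement's English description precedes it below -/
import Mathlib

section
/- Let d ≥ 3 be an integer, λ ∈ ℂ with λ ≠ 0, and ε > 0, and let U = {z ∈ ℂ : 0 < |z| < ε}. Then the holomorphic vector field X(z) = λ·z^{2−d} = λ/z^{d−2} on U is not semi-complete; more precisely, for every p ∈ U there exists no maximal solution through p: there is no open connected set V ⊆ ℂ with 0 ∈ V together with a holomorphic map φ : V → U satisfying φ(0) = p and φ'(T) = λ·φ(T)^{2−d} for all T ∈ V, such that for every point T̂ in the topological boundary of V and every sequence (T_i) in V converging to T̂, the sequence (φ(T_i)) eventually leaves every compact subset of U. -/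
open Filter

/-!
Let `τ` be a primitive of `1 / X`, so that differences of `τ` measure time along the flow of `X`.
A solution `φ` starting at `p` satisfies `τ (φ T) = τ p + T`, so `φ` can reach a point `z` only at
time `τ z - τ p`. Hence, if `φ` is maximal, its image is not only open but also relatively closed
in `U`: when `φ (T i)` converges to `z ∈ U`, the times `T i` converge. So `φ` reaches every point of
the component of `p`, and `τ` takes the value `τ p` there only at `p`.
For `X z = lam * z ^ n` we have `τ z = z ^ (1 - n) / ((1 - n) * lam)`, which is unchanged when `z`
is multiplied by a `(1 - n)`-th root of unity.
-/

/-- `φ`, with domain `V`, is a maximal solution through `p` of the complex-time differential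
equation `dφ/dT = X (φ T)` in `U`. The values of `X` outside `U` and those of `φ` outside `V` are
irrelevant. The field `eventually_notMem` is maximality: `φ` leaves every compact subset of `U` at
the boundary of `V`. -/
structure IsMaximalSolution (X : ℂ → ℂ) (U : Set ℂ) (p : ℂ) (V : Set ℂ) (φ : ℂ → ℂ) : Prop where
  isOpen : IsOpen V
  isConnected : IsConnected V
  zero_mem : (0 : ℂ) ∈ V
  mapsTo : ∀ T ∈ V, φ T ∈ U
  map_zero : φ 0 = p
  hasDerivAt : ∀ T ∈ V, HasDerivAt φ (X (φ T)) T
  eventually_notMem : ∀ T' ∈ frontier V, ∀ Ti : ℕ → ℂ, (∀ i, Ti i ∈ V) →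
    Tendsto Ti atTop (nhds T') → ∀ K : Set ℂ, IsCompact K → K ⊆ U → ∀ᶠ i in atTop, φ (Ti i) ∉ K

namespace IsMaximalSolution

variable {X τ φ : ℂ → ℂ} {U V C : Set ℂ} {p q : ℂ}

lemma mem_of_tendsto (h : IsMaximalSolution X U p V φ) {Ti : ℕ → ℂ} (hTi : ∀ i, Ti i ∈ V)
    {T z : ℂ} (hT : Tendsto Ti atTop (nhds T)) (hz : z ∈ U)
    (hφ : Tendsto (fun i => φ (Ti i)) atTop (nhds z)) : T ∈ V := by
  by_contra hTV
  have hfrontier : T ∈ frontier V :=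
    h.isOpen.frontier_eq ▸ ⟨mem_closure_of_tendsto hT (.of_forall hTi), hTV⟩
  have hsub : insert z (Set.range fun i => φ (Ti i)) ⊆ U :=
    Set.insert_subset hz (Set.range_subset_iff.mpr fun i => h.mapsTo _ (hTi i))
  obtain ⟨i, hi⟩ :=
    (h.eventually_notMem T hfrontier Ti hTi hT _ hφ.isCompact_insert_range hsub).exists
  exact hi (.inr ⟨i, rfl⟩)

lemma isOpen_image (h : IsMaximalSolution X U p V φ) (hX : ∀ z ∈ U, X z ≠ 0) :
    IsOpen (φ '' V) := by
  have hdiff : DifferentiableOn ℂ φ V := fun T hT =>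
    (h.hasDerivAt T hT).differentiableAt.differentiableWithinAt
  refine isOpen_iff_mem_nhds.mpr ?_
  rintro _ ⟨T, hT, rfl⟩
  have hVT : V ∈ nhds T := h.isOpen.mem_nhds hT
  have hstrict : HasStrictDerivAt φ (X (φ T)) T := by
    simpa only [(h.hasDerivAt T hT).deriv] using (hdiff.analyticAt hVT).hasStrictDerivAt
  rw [← hstrict.map_nhds_eq (hX _ (h.mapsTo T hT))]
  exact image_mem_map hVT

lemma primitive_apply (h : IsMaximalSolution X U p V φ) (hX : ∀ z ∈ U, X z ≠ 0)
    (hτ : ∀ z ∈ U, HasDerivAt τ (X z)⁻¹ z) {T : ℂ} (hT : T ∈ V) : τ (φ T) = τ p + T := by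
  have hderiv : ∀ S ∈ V, HasDerivAt (fun S => τ (φ S) - S) 0 S := fun S hS =>
    (((hτ _ (h.mapsTo S hS)).comp S (h.hasDerivAt S hS)).sub (hasDerivAt_id S)).congr_deriv (by
      rw [inv_mul_cancel₀ (hX _ (h.mapsTo S hS)), sub_self])
  have hconst : τ (φ T) - T = τ (φ 0) - 0 :=
    h.isOpen.is_const_of_deriv_eq_zero h.isConnected.isPreconnected
      (fun S hS => (hderiv S hS).differentiableAt.differentiableWithinAt)
      (fun S hS => (hderiv S hS).deriv) hT h.zero_mem
  rw [h.map_zero] at hconst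
  linear_combination hconst

lemma closure_image_inter_subset (h : IsMaximalSolution X U p V φ) (hX : ∀ z ∈ U, X z ≠ 0)
    (hτ : ∀ z ∈ U, HasDerivAt τ (X z)⁻¹ z) : closure (φ '' V) ∩ U ⊆ φ '' V := by
  rintro z ⟨hz, hzU⟩
  obtain ⟨w, hw, hwz⟩ := mem_closure_iff_seq_limit.mp hz
  choose Ti hTi hφTi using hw
  obtain rfl : (fun i => φ (Ti i)) = w := funext hφTi
  have hTi_eq : ∀ i, τ (φ (Ti i)) - τ p = Ti i := fun i => by
    rw [h.primitive_apply hX hτ (hTi i), add_sub_cancel_left]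
  have hlim : Tendsto Ti atTop (nhds (τ z - τ p)) :=
    (((hτ z hzU).continuousAt.tendsto.comp hwz).sub_const (τ p)).congr hTi_eq
  have hmem : τ z - τ p ∈ V := h.mem_of_tendsto hTi hlim hzU hwz
  exact ⟨_, hmem,
    tendsto_nhds_unique ((h.hasDerivAt _ hmem).continuousAt.tendsto.comp hlim) hwz⟩

lemma subset_image_of_isPreconnected (h : IsMaximalSolution X U p V φ) (hX : ∀ z ∈ U, X z ≠ 0)
    (hτ : ∀ z ∈ U, HasDerivAt τ (X z)⁻¹ z) (hC : IsPreconnected C) (hCU : C ⊆ U) (hp : p ∈ C) :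
    C ⊆ φ '' V :=
  hC.subset_of_closure_inter_subset (h.isOpen_image hX) ⟨p, hp, 0, h.zero_mem, h.map_zero⟩
    ((Set.inter_subset_inter_right _ hCU).trans (h.closure_image_inter_subset hX hτ))

theorem eq_of_primitive_eq (h : IsMaximalSolution X U p V φ) (hX : ∀ z ∈ U, X z ≠ 0)
    (hτ : ∀ z ∈ U, HasDerivAt τ (X z)⁻¹ z) (hC : IsPreconnected C) (hCU : C ⊆ U) (hp : p ∈ C)
    (hq : q ∈ C) (hpq : τ q = τ p) : q = p := by
  obtain ⟨T, hT, rfl⟩ := h.subset_image_of_isPreconnected hX hτ hC hCU hp hq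
  have hT0 : T = 0 := by linear_combination hpq - h.primitive_apply hX hτ hT
  rw [hT0, h.map_zero]

end IsMaximalSolution

lemma hasDerivAt_zpow_div_const_mul {n : ℤ} (hn : n ≠ 1) (lam : ℂ) {z : ℂ} (hz : z ≠ 0) :
    HasDerivAt (fun z => z ^ (1 - n) / ((1 - n : ℤ) * lam)) (lam * z ^ n)⁻¹ z := by
  have hn' : ((1 - n : ℤ) : ℂ) ≠ 0 := Int.cast_ne_zero.mpr (sub_ne_zero.mpr hn.symm)
  refine ((hasDerivAt_zpow (1 - n) z (.inl hz)).div_const _).congr_deriv ?_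
  rw [mul_div_mul_left _ _ hn', sub_sub_cancel_left, zpow_neg, mul_inv_rev, div_eq_mul_inv]

lemma exists_ne_one_norm_eq_one_zpow_eq_one {k : ℤ} (hk : 1 < k.natAbs) :
    ∃ ζ : ℂ, ζ ≠ 1 ∧ ‖ζ‖ = 1 ∧ ζ ^ k = 1 := by
  have hk0 : k.natAbs ≠ 0 := by omega
  have hζ := Complex.isPrimitiveRoot_exp k.natAbs hk0
  exact ⟨_, hζ.ne_one hk, hζ.norm'_eq_one hk0,
    (hζ.zpow_eq_one_iff_dvd k).mpr Int.natAbs_dvd_self⟩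

theorem stmt_3_general {n : ℤ} (hn₀ : n ≠ 0) (hn₁ : n ≠ 1) (hn₂ : n ≠ 2) {lam : ℂ} (hlam : lam ≠ 0)
    {U : Set ℂ} (hU : 0 ∉ U) {p : ℂ} (hp : Metric.sphere 0 ‖p‖ ⊆ U) :
    ¬ ∃ (V : Set ℂ) (φ : ℂ → ℂ), IsMaximalSolution (fun z => lam * z ^ n) U p V φ := by
  rintro ⟨V, φ, h⟩
  have hne : ∀ z ∈ U, z ≠ 0 := fun z hz => ne_of_mem_of_not_mem hz hU
  have hpC : p ∈ Metric.sphere (0 : ℂ) ‖p‖ := mem_sphere_zero_iff_norm.mpr rfl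
  obtain ⟨ζ, hζ, hζ_norm, hζ_pow⟩ :=
    exists_ne_one_norm_eq_one_zpow_eq_one (k := 1 - n) (by omega)
  have hsphere : IsPreconnected (Metric.sphere (0 : ℂ) ‖p‖) :=
    isPreconnected_sphere (by simp [Complex.rank_real_complex]) 0 ‖p‖
  have hfix : ζ * p = p := h.eq_of_primitive_eq
    (fun z hz => mul_ne_zero hlam (zpow_ne_zero n (hne z hz)))
    (fun z hz => hasDerivAt_zpow_div_const_mul hn₁ lam (hne z hz)) hsphere hp hpC
    (by simp [hζ_norm]) (by rw [mul_zpow, hζ_pow, one_mul])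
  exact hζ ((mul_eq_right₀ (hne p (hp hpC))).mp hfix)

/-- for `d ≥ 3` the vector field `X(z) = λ z^{2-d}` on the
punctured disc `U = {0 < |z| < ε}` is not semi-complete: no point of `U`
admits a maximal solution. -/
theorem stmt_3 (d : ℕ) (hd : 3 ≤ d) (lam : ℂ) (hlam : lam ≠ 0)
    (ε : ℝ) (hε : 0 < ε) :
    ∀ p ∈ {z : ℂ | 0 < ‖z‖ ∧ ‖z‖ < ε},
      ¬ ∃ (V : Set ℂ) (φ : ℂ → ℂ),
          IsOpen V ∧ IsConnected V ∧ (0 : ℂ) ∈ V ∧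
          (∀ T ∈ V, φ T ∈ {z : ℂ | 0 < ‖z‖ ∧ ‖z‖ < ε}) ∧
          φ 0 = p ∧
          (∀ T ∈ V, HasDerivAt φ (lam * φ T ^ ((2 : ℤ) - (d : ℤ))) T) ∧
          (∀ T' ∈ frontier V, ∀ Ti : ℕ → ℂ, (∀ i, Ti i ∈ V) →
            Tendsto Ti atTop (nhds T') →
            ∀ K : Set ℂ, IsCompact K →
              K ⊆ {z : ℂ | 0 < ‖z‖ ∧ ‖z‖ < ε} →
              ∀ᶠ i in atTop, φ (Ti i) ∉ K) := by
  rintro p ⟨hp, hpε⟩ ⟨V, φ, hV, hVc, h0, hU, hφ0, hφ, hmax⟩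
  refine stmt_3_general (by omega) (by omega) (by omega) hlam (by simp) (fun z hz => ?_)
    ⟨V, φ, hV, hVc, h0, hU, hφ0, hφ, hmax⟩
  have hz_norm : ‖z‖ = ‖p‖ := mem_sphere_zero_iff_norm.mp hz
  exact ⟨hz_norm ▸ hp, hz_norm ▸ hpε⟩
end

section
/- Let c > 0 and let (γ_j)_{j∈ℕ} be a sequence of holomorphic automorphisms of the open unit disc 𝔻 such that |γ_j(0)| ≥ (e^{cj}−1)/(e^{cj}+1) for every j ∈ ℕ. Then for every w₀ ∈ 𝔻 the series Σ_{j=0}^{∞} |γ_j'(w₀)|^{1/2} converges. -/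
open Metric

/-! Conjugating a holomorphic self-map `f` of the disc by the involutions exchanging `0` with `z`
and with `f z` reduces it to the Schwarz lemma, which yields the Schwarz–Pick inequalities
`‖f' z‖ ≤ (1 - ‖f z‖²) / (1 - ‖z‖²)` and `ρ (f w) (f z) ≤ ρ w z` for the pseudo-hyperbolic
distance `ρ`. The second one makes `1 - ‖f z‖²` and `1 - ‖f w‖²` comparable, with a constant
depending on `w` and `z` only, so that the derivative at `z` decays as fast as `1 - ‖f w‖²`.
If `f w` lies at hyperbolic distance at least `t` from `0`, this is at most a constant times
`exp (-t)`; with `t = c * j` the series is dominated by a geometric one. -/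

open Set
open scoped ComplexConjugate

lemma one_sub_norm_sq_pos {E : Type*} [SeminormedAddGroup E] {x : E} (hx : ‖x‖ < 1) :
    0 < 1 - ‖x‖ ^ 2 :=
  sub_pos.2 (pow_lt_one₀ (norm_nonneg x) hx two_ne_zero)

section DiscInvolution

/-- The involutive automorphism of the unit disc exchanging `0` and `a`. Its modulus at `z` is the
pseudo-hyperbolic distance between `a` and `z`. -/
noncomputable def discInvolution (a z : ℂ) : ℂ := (a - z) / (1 - conj a * z)

variable {a z : ℂ}

@[simp]
lemma discInvolution_self : discInvolution a a = 0 := by simp [discInvolution]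

@[simp]
lemma discInvolution_apply_zero : discInvolution a 0 = a := by simp [discInvolution]

lemma one_sub_norm_le_norm_one_sub_conj_mul (ha : ‖a‖ ≤ 1) : 1 - ‖z‖ ≤ ‖1 - conj a * z‖ :=
  calc
    1 - ‖z‖ ≤ ‖(1 : ℂ)‖ - ‖conj a * z‖ := by
      rw [norm_one, norm_mul, RCLike.norm_conj]
      gcongr
      exact mul_le_of_le_one_left (norm_nonneg z) ha
    _ ≤ ‖1 - conj a * z‖ := norm_sub_norm_le _ _

lemma one_sub_conj_mul_ne_zero (ha : ‖a‖ ≤ 1) (hz : ‖z‖ < 1) : 1 - conj a * z ≠ 0 :=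
  norm_pos_iff.1 <| (sub_pos.2 hz).trans_le (one_sub_norm_le_norm_one_sub_conj_mul ha)

lemma one_sub_conj_mul_self (a : ℂ) : 1 - conj a * a = ((1 - ‖a‖ ^ 2 : ℝ) : ℂ) := by
  rw [Complex.conj_mul']
  push_cast
  rfl

lemma norm_one_sub_conj_mul_sq_sub_norm_sub_sq (a z : ℂ) :
    ‖1 - conj a * z‖ ^ 2 - ‖a - z‖ ^ 2 = (1 - ‖a‖ ^ 2) * (1 - ‖z‖ ^ 2) := by
  simp only [← Complex.normSq_eq_norm_sq, Complex.normSq_apply, Complex.sub_re, Complex.sub_im,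
    Complex.mul_re, Complex.mul_im, Complex.conj_re, Complex.conj_im, Complex.one_re,
    Complex.one_im]
  ring

lemma one_sub_norm_discInvolution_sq (h : 1 - conj a * z ≠ 0) :
    1 - ‖discInvolution a z‖ ^ 2 = (1 - ‖a‖ ^ 2) * (1 - ‖z‖ ^ 2) / ‖1 - conj a * z‖ ^ 2 := by
  have hne : ‖1 - conj a * z‖ ^ 2 ≠ 0 := pow_ne_zero 2 (norm_ne_zero_iff.2 h)
  rw [discInvolution, norm_div, div_pow, one_sub_div hne, norm_one_sub_conj_mul_sq_sub_norm_sub_sq]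

lemma norm_discInvolution_lt_one (ha : ‖a‖ < 1) (hz : ‖z‖ < 1) : ‖discInvolution a z‖ < 1 := by
  have hne : 1 - conj a * z ≠ 0 := one_sub_conj_mul_ne_zero ha.le hz
  have hpos : 0 < 1 - ‖discInvolution a z‖ ^ 2 := by
    rw [one_sub_norm_discInvolution_sq hne]
    have := one_sub_norm_sq_pos ha
    have := one_sub_norm_sq_pos hz
    positivity
  exact (sq_lt_one_iff₀ (norm_nonneg _)).1 (sub_pos.1 hpos)

lemma mapsTo_discInvolution_ball (ha : ‖a‖ < 1) :
    MapsTo (discInvolution a) (ball 0 1) (ball 0 1) := fun _ hz =>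
  mem_ball_zero_iff.2 (norm_discInvolution_lt_one ha (mem_ball_zero_iff.1 hz))

lemma discInvolution_discInvolution (ha : 1 - conj a * a ≠ 0) (hz : 1 - conj a * z ≠ 0) :
    discInvolution a (discInvolution a z) = z := by
  have hnum : a - discInvolution a z = z * (1 - conj a * a) / (1 - conj a * z) := by
    rw [discInvolution, sub_div' hz]
    ring
  have hden : 1 - conj a * discInvolution a z = (1 - conj a * a) / (1 - conj a * z) := by
    rw [discInvolution, mul_div_assoc', one_sub_div hz]
    ring
  rw [discInvolution, hnum, hden, div_div_div_cancel_right₀ hz, mul_div_cancel_right₀ _ ha]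

lemma hasDerivAt_discInvolution (h : 1 - conj a * z ≠ 0) :
    HasDerivAt (discInvolution a) (-(1 - conj a * a) / (1 - conj a * z) ^ 2) z := by
  have hquot := ((hasDerivAt_id z).const_sub a).div
    (((hasDerivAt_id z).const_mul (conj a)).const_sub 1) h
  refine hquot.congr_deriv ?_
  simp only [id_eq]
  ring

lemma differentiableOn_discInvolution (ha : ‖a‖ ≤ 1) :
    DifferentiableOn ℂ (discInvolution a) (ball 0 1) := fun z hz => by
  have hne : 1 - conj a * z ≠ 0 := one_sub_conj_mul_ne_zero ha (mem_ball_zero_iff.1 hz)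
  exact (hasDerivAt_discInvolution hne).differentiableAt.differentiableWithinAt

lemma one_sub_norm_discInvolution_sq_mul_le (ha : ‖a‖ ≤ 1) (hz : ‖z‖ < 1) :
    (1 - ‖discInvolution a z‖ ^ 2) * (1 - ‖z‖ ^ 2) ≤ 4 * (1 - ‖a‖ ^ 2) := by
  have hz' : 0 < 1 - ‖z‖ := sub_pos.2 hz
  have ha' : 0 ≤ 1 - ‖a‖ ^ 2 := sub_nonneg.2 (pow_le_one₀ (norm_nonneg a) ha)
  calc
    (1 - ‖discInvolution a z‖ ^ 2) * (1 - ‖z‖ ^ 2)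
      = (1 - ‖a‖ ^ 2) * (1 - ‖z‖ ^ 2) ^ 2 / ‖1 - conj a * z‖ ^ 2 := by
        rw [one_sub_norm_discInvolution_sq (one_sub_conj_mul_ne_zero ha hz)]
        ring
    _ ≤ (1 - ‖a‖ ^ 2) * (1 - ‖z‖ ^ 2) ^ 2 / (1 - ‖z‖) ^ 2 := by
        gcongr
        exact one_sub_norm_le_norm_one_sub_conj_mul ha
    _ = (1 + ‖z‖) ^ 2 * (1 - ‖a‖ ^ 2) := by
        field_simp
        ring
    _ ≤ 2 ^ 2 * (1 - ‖a‖ ^ 2) := by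
        gcongr
        linarith
    _ = 4 * (1 - ‖a‖ ^ 2) := by norm_num

end DiscInvolution

section SchwarzPick

/-- The self-map `f` of the unit disc in the coordinates that place both `a` and `f a` at the
origin, so that the Schwarz lemma applies to it. -/
noncomputable def discNormalization (f : ℂ → ℂ) (a : ℂ) : ℂ → ℂ :=
  discInvolution (f a) ∘ f ∘ discInvolution a

variable {f : ℂ → ℂ} {w z : ℂ}

lemma discNormalization_zero (f : ℂ → ℂ) (z : ℂ) : discNormalization f z 0 = 0 := by
  simp [discNormalization]

lemma mapsTo_discNormalization_ball (hmaps : MapsTo f (ball 0 1) (ball 0 1))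
    (hz : z ∈ ball (0 : ℂ) 1) : MapsTo (discNormalization f z) (ball 0 1) (ball 0 1) :=
  (mapsTo_discInvolution_ball (mem_ball_zero_iff.1 (hmaps hz))).comp <|
    hmaps.comp (mapsTo_discInvolution_ball (mem_ball_zero_iff.1 hz))

lemma differentiableOn_discNormalization (hf : DifferentiableOn ℂ f (ball 0 1))
    (hmaps : MapsTo f (ball 0 1) (ball 0 1)) (hz : z ∈ ball (0 : ℂ) 1) :
    DifferentiableOn ℂ (discNormalization f z) (ball 0 1) := by
  have hz' : ‖z‖ < 1 := mem_ball_zero_iff.1 hz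
  have hfz : ‖f z‖ < 1 := mem_ball_zero_iff.1 (hmaps hz)
  have hmaps' := mapsTo_discInvolution_ball hz'
  exact (differentiableOn_discInvolution hfz.le).comp
    (hf.comp (differentiableOn_discInvolution hz'.le) hmaps') (hmaps.comp hmaps')

theorem norm_discInvolution_map_le_of_mapsTo_ball (hf : DifferentiableOn ℂ f (ball 0 1))
    (hmaps : MapsTo f (ball 0 1) (ball 0 1)) (hw : w ∈ ball (0 : ℂ) 1)
    (hz : z ∈ ball (0 : ℂ) 1) :
    ‖discInvolution (f w) (f z)‖ ≤ ‖discInvolution w z‖ := by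
  have hw' : ‖w‖ < 1 := mem_ball_zero_iff.1 hw
  have hz' : ‖z‖ < 1 := mem_ball_zero_iff.1 hz
  have hschwarz := Complex.norm_le_norm_of_mapsTo_ball
    (differentiableOn_discNormalization hf hmaps hw)
    ((mapsTo_discNormalization_ball hmaps hw).mono_right ball_subset_closedBall)
    (discNormalization_zero f w) (norm_discInvolution_lt_one hw' hz')
  have hinvol : discInvolution w (discInvolution w z) = z := discInvolution_discInvolution
    (one_sub_conj_mul_ne_zero hw'.le hw') (one_sub_conj_mul_ne_zero hw'.le hz')
  simpa only [discNormalization, Function.comp_apply, hinvol] using hschwarz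

lemma hasDerivAt_discNormalization_zero (hf : DifferentiableOn ℂ f (ball 0 1))
    (hmaps : MapsTo f (ball 0 1) (ball 0 1)) (hz : z ∈ ball (0 : ℂ) 1) :
    HasDerivAt (discNormalization f z)
      (deriv f z * ((1 - ‖z‖ ^ 2 : ℝ) : ℂ) / ((1 - ‖f z‖ ^ 2 : ℝ) : ℂ)) 0 := by
  have hfz : ‖f z‖ < 1 := mem_ball_zero_iff.1 (hmaps hz)
  have hne : 1 - conj (f z) * f z ≠ 0 := one_sub_conj_mul_ne_zero hfz.le hfz
  have hinner := hasDerivAt_discInvolution (a := z) (z := 0) (by simp)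
  have hderiv : HasDerivAt f (deriv f z) (discInvolution z 0) := by
    rw [discInvolution_apply_zero]
    exact (hf.differentiableAt (isOpen_ball.mem_nhds hz)).hasDerivAt
  have houter : HasDerivAt (discInvolution (f z))
      (-(1 - conj (f z) * f z) / (1 - conj (f z) * f z) ^ 2) (f (discInvolution z 0)) := by
    rw [discInvolution_apply_zero]
    exact hasDerivAt_discInvolution hne
  refine (houter.comp 0 (hderiv.comp 0 hinner)).congr_deriv ?_
  rw [← one_sub_conj_mul_self, ← one_sub_conj_mul_self]
  field_simp
  ring

theorem norm_deriv_le_of_mapsTo_ball (hf : DifferentiableOn ℂ f (ball 0 1))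
    (hmaps : MapsTo f (ball 0 1) (ball 0 1)) (hz : z ∈ ball (0 : ℂ) 1) :
    ‖deriv f z‖ ≤ (1 - ‖f z‖ ^ 2) / (1 - ‖z‖ ^ 2) := by
  have hz' : 0 < 1 - ‖z‖ ^ 2 := one_sub_norm_sq_pos (mem_ball_zero_iff.1 hz)
  have hfz : 0 < 1 - ‖f z‖ ^ 2 := one_sub_norm_sq_pos (mem_ball_zero_iff.1 (hmaps hz))
  have hschwarz : ‖deriv (discNormalization f z) 0‖ ≤ 1 := by
    refine Complex.norm_deriv_le_one_of_mapsTo_ball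
      (differentiableOn_discNormalization hf hmaps hz) ?_ one_pos
    rw [discNormalization_zero]
    exact (mapsTo_discNormalization_ball hmaps hz).mono_right ball_subset_closedBall
  rwa [(hasDerivAt_discNormalization_zero hf hmaps hz).deriv, norm_div, norm_mul,
    Complex.norm_of_nonneg hz'.le, Complex.norm_of_nonneg hfz.le, div_le_one hfz,
    ← le_div_iff₀ hz'] at hschwarz

lemma one_sub_norm_map_sq_le_of_mapsTo_ball (hf : DifferentiableOn ℂ f (ball 0 1))
    (hmaps : MapsTo f (ball 0 1) (ball 0 1)) (hw : w ∈ ball (0 : ℂ) 1)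
    (hz : z ∈ ball (0 : ℂ) 1) :
    1 - ‖f z‖ ^ 2 ≤ 4 / (1 - ‖discInvolution w z‖ ^ 2) * (1 - ‖f w‖ ^ 2) := by
  have hfw : ‖f w‖ < 1 := mem_ball_zero_iff.1 (hmaps hw)
  have hfz : ‖f z‖ < 1 := mem_ball_zero_iff.1 (hmaps hz)
  have hpos : 0 < 1 - ‖discInvolution w z‖ ^ 2 := one_sub_norm_sq_pos
    (norm_discInvolution_lt_one (mem_ball_zero_iff.1 hw) (mem_ball_zero_iff.1 hz))
  rw [div_mul_eq_mul_div, le_div_iff₀' hpos]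
  calc
    (1 - ‖discInvolution w z‖ ^ 2) * (1 - ‖f z‖ ^ 2)
      ≤ (1 - ‖discInvolution (f w) (f z)‖ ^ 2) * (1 - ‖f z‖ ^ 2) := by
        have := (one_sub_norm_sq_pos hfz).le
        gcongr
        exact norm_discInvolution_map_le_of_mapsTo_ball hf hmaps hw hz
    _ ≤ 4 * (1 - ‖f w‖ ^ 2) := one_sub_norm_discInvolution_sq_mul_le hfw.le hfz

lemma norm_deriv_le_mul_one_sub_norm_map_sq (hf : DifferentiableOn ℂ f (ball 0 1))
    (hmaps : MapsTo f (ball 0 1) (ball 0 1)) (hw : w ∈ ball (0 : ℂ) 1)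
    (hz : z ∈ ball (0 : ℂ) 1) :
    ‖deriv f z‖ ≤
      4 / ((1 - ‖discInvolution w z‖ ^ 2) * (1 - ‖z‖ ^ 2)) * (1 - ‖f w‖ ^ 2) := by
  have hz' : 0 < 1 - ‖z‖ ^ 2 := one_sub_norm_sq_pos (mem_ball_zero_iff.1 hz)
  calc
    ‖deriv f z‖ ≤ (1 - ‖f z‖ ^ 2) / (1 - ‖z‖ ^ 2) := norm_deriv_le_of_mapsTo_ball hf hmaps hz
    _ ≤ 4 / (1 - ‖discInvolution w z‖ ^ 2) * (1 - ‖f w‖ ^ 2) / (1 - ‖z‖ ^ 2) := by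
        gcongr
        exact one_sub_norm_map_sq_le_of_mapsTo_ball hf hmaps hw hz
    _ = 4 / ((1 - ‖discInvolution w z‖ ^ 2) * (1 - ‖z‖ ^ 2)) * (1 - ‖f w‖ ^ 2) := by
        rw [mul_div_right_comm, div_div]

end SchwarzPick

section PoincareSeries

theorem summable_norm_deriv_rpow_of_summable_one_sub_norm_sq_rpow {ι : Type*}
    {f : ι → ℂ → ℂ} {w z : ℂ} {s : ℝ} (hs : 0 ≤ s)
    (hf : ∀ i, DifferentiableOn ℂ (f i) (ball 0 1))
    (hmaps : ∀ i, MapsTo (f i) (ball 0 1) (ball 0 1)) (hw : w ∈ ball (0 : ℂ) 1)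
    (hz : z ∈ ball (0 : ℂ) 1) (hsum : Summable fun i => (1 - ‖f i w‖ ^ 2) ^ s) :
    Summable fun i => ‖deriv (f i) z‖ ^ s := by
  have hz' : 0 < 1 - ‖z‖ ^ 2 := one_sub_norm_sq_pos (mem_ball_zero_iff.1 hz)
  have hwz : 0 < 1 - ‖discInvolution w z‖ ^ 2 := one_sub_norm_sq_pos
    (norm_discInvolution_lt_one (mem_ball_zero_iff.1 hw) (mem_ball_zero_iff.1 hz))
  let C : ℝ := 4 / ((1 - ‖discInvolution w z‖ ^ 2) * (1 - ‖z‖ ^ 2))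
  have hC : 0 ≤ C := by positivity
  refine (hsum.mul_left (C ^ s)).of_nonneg_of_le (fun i => by positivity) fun i => ?_
  have hfw : 0 ≤ 1 - ‖f i w‖ ^ 2 := (one_sub_norm_sq_pos (mem_ball_zero_iff.1 (hmaps i hw))).le
  calc
    ‖deriv (f i) z‖ ^ s ≤ (C * (1 - ‖f i w‖ ^ 2)) ^ s :=
      Real.rpow_le_rpow (norm_nonneg _)
        (norm_deriv_le_mul_one_sub_norm_map_sq (hf i) (hmaps i) hw hz) hs
    _ = C ^ s * (1 - ‖f i w‖ ^ 2) ^ s := Real.mul_rpow hC hfw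

lemma one_sub_sq_le_of_exp_sub_one_div_exp_add_one_le {t r : ℝ}
    (h : (Real.exp t - 1) / (Real.exp t + 1) ≤ r) : 1 - r ^ 2 ≤ 4 * Real.exp (-t) := by
  calc
    1 - r ^ 2 ≤ 2 * (1 - r) := by linarith [sq_nonneg (1 - r)]
    _ ≤ 2 * (1 - (Real.exp t - 1) / (Real.exp t + 1)) := by gcongr
    _ = 4 / (Real.exp t + 1) := by
        field_simp
        ring
    _ ≤ 4 / Real.exp t := by
        gcongr
        linarith
    _ = 4 * Real.exp (-t) := by rw [Real.exp_neg, div_eq_mul_inv]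

lemma summable_one_sub_sq_rpow_of_exp_sub_one_div_exp_add_one_le {c s : ℝ} {r : ℕ → ℝ}
    (hc : 0 < c) (hs : 0 < s) (hr : ∀ j, r j ^ 2 ≤ 1)
    (h : ∀ j : ℕ, (Real.exp (c * j) - 1) / (Real.exp (c * j) + 1) ≤ r j) :
    Summable fun j => (1 - r j ^ 2) ^ s := by
  have hgeom : Summable fun j : ℕ => 4 ^ s * Real.exp (j * (-(c * s))) :=
    (Real.summable_exp_nat_mul_iff.2 (neg_neg_of_pos (mul_pos hc hs))).mul_left _
  refine hgeom.of_nonneg_of_le (fun j => Real.rpow_nonneg (sub_nonneg.2 (hr j)) s) fun j => ?_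
  calc
    (1 - r j ^ 2) ^ s ≤ (4 * Real.exp (-(c * j))) ^ s :=
      Real.rpow_le_rpow (sub_nonneg.2 (hr j))
        (one_sub_sq_le_of_exp_sub_one_div_exp_add_one_le (h j)) hs.le
    _ = 4 ^ s * Real.exp (j * (-(c * s))) := by
      rw [Real.mul_rpow (by norm_num) (Real.exp_pos _).le, ← Real.exp_mul]
      ring_nf

theorem stmt_8_general {c s : ℝ} (hc : 0 < c) (hs : 0 < s) {f : ℕ → ℂ → ℂ} {w z : ℂ}
    (hf : ∀ j, DifferentiableOn ℂ (f j) (ball 0 1))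
    (hmaps : ∀ j, MapsTo (f j) (ball 0 1) (ball 0 1)) (hw : w ∈ ball (0 : ℂ) 1)
    (hz : z ∈ ball (0 : ℂ) 1)
    (hdist : ∀ j : ℕ, (Real.exp (c * j) - 1) / (Real.exp (c * j) + 1) ≤ ‖f j w‖) :
    Summable fun j => ‖deriv (f j) z‖ ^ s :=
  summable_norm_deriv_rpow_of_summable_one_sub_norm_sq_rpow hs.le hf hmaps hw hz <|
    summable_one_sub_sq_rpow_of_exp_sub_one_div_exp_add_one_le hc hs
      (fun j => pow_le_one₀ (norm_nonneg _) (mem_ball_zero_iff.1 (hmaps j hw)).le) hdist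

end PoincareSeries

/-- Lemma 7.2 of the paper: if `γ_j` are automorphisms of the
unit disc with `|γ_j(0)| ≥ (e^{cj}-1)/(e^{cj}+1)`, then for every base point
`w₀` of the disc the reduced Poincaré series with exponent `1/2` converges:
`Σ_j |γ_j'(w₀)|^{1/2} < ∞`. -/
theorem stmt_8 (c : ℝ) (hc : 0 < c) (γ : ℕ → ℂ → ℂ)
    (hhol : ∀ j, DifferentiableOn ℂ (γ j) (ball (0 : ℂ) 1))
    (hbij : ∀ j, Set.BijOn (γ j) (ball (0 : ℂ) 1) (ball (0 : ℂ) 1))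
    (hdist : ∀ j : ℕ,
      (Real.exp (c * j) - 1) / (Real.exp (c * j) + 1) ≤ ‖γ j 0‖) :
    ∀ w₀ ∈ ball (0 : ℂ) 1,
      Summable (fun j : ℕ => ‖deriv (γ j) w₀‖ ^ ((1 : ℝ) / 2)) := fun _ hw₀ =>
  stmt_8_general hc one_half_pos hhol (fun j => (hbij j).mapsTo) (mem_ball_self one_pos) hw₀ hdist
end
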